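/- Moments of the multiplicative Boolean convolution: let p, q be integers with 0 ≤ p ≤ q and q ≥ 1, let μ ∈ M_p and ν ∈ M_q. If ρ is a probability measure on [0,∞) with B_ρ(z) = B_μ(z)·B_ν(z) for all z ∈ ℂ∖[0,∞) (so ρ = μ ⨯∪ ν, the multiplicative Boolean convolution), then ρ ∈ M_p, i.e. ∫ x^p dρ(x) < ∞ and ∫ x^{p+1} dρ(x) = ∞. -/

import Mathlib

open MeasureTheory Filter Set Complex

noncomputable section

/-- `Ψ_τ(z) = ∫ zt/(1 − zt) dτ(t)`. -/
def PsiTrans (τ : Measure ℝ) (z : ℂ) : ℂ := ∫ t, (z * (t : ℂ)) / (1 - z * (t : ℂ)) ∂τ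

/-- `η_τ(z) = Ψ_τ(z)/(1 + Ψ_τ(z))`. -/
def etaTrans (τ : Measure ℝ) (z : ℂ) : ℂ := PsiTrans τ z / (1 + PsiTrans τ z)

/-- `B_τ(z) = z/η_τ(z)`. -/
def Btrans (τ : Measure ℝ) (z : ℂ) : ℂ := z / etaTrans τ z

/-- membership of `z` in `ℂ ∖ [0,∞)`. -/
def offHalfLine (z : ℂ) : Prop := z.im ≠ 0 ∨ z.re < 0

/-- `μ` has a regularly varying tail of index `−α`. -/
def RegVarTail (μ : Measure ℝ) (α : ℝ) : Prop :=
  (∀ x : ℝ, 0 ≤ x → 0 < μ (Set.Ioi x)) ∧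
  ∀ t : ℝ, 0 < t →
    Filter.Tendsto (fun x : ℝ => (μ (Set.Ioi (t * x))).toReal / (μ (Set.Ioi x)).toReal)
      Filter.atTop (nhds (t ^ (-α)))

/-- `μ ∈ M_p`: the `p`-th moment is finite but the `(p+1)`-th moment is infinite. -/
def MemMp (μ : Measure ℝ) (p : ℕ) : Prop :=
  (∫⁻ x, ENNReal.ofReal (x ^ p) ∂μ) ≠ ⊤ ∧ (∫⁻ x, ENNReal.ofReal (x ^ (p + 1)) ∂μ) = ⊤

/-!
The proof uses only the values of the transforms on the negative half-line. For `s > 0` and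
`R_n(s) = ∫ tⁿ⁺¹ / (1 + s t) dτ(t)` one has `B_τ(-s) = 1 / R_0(s) - s`, and
`R_0(s) = ∑_{k < n} (-s)ᵏ m_{k+1} + (-s)ⁿ R_n(s)` with `s R_n(s) → 0` as soon as `m_n < ∞`.
Two such expansions of one function have remainders differing by a convergent function, and
`R_n(s) → ∞` as `s → 0⁺` exactly when `m_{n+1} = ∞`. Hence, for `p ≥ 1`, `τ ∈ M_p` amounts to `R_0`
having an expansion of order `p` whose remainder tends to `∞`. Since the leading coefficients are
positive, taking reciprocals turns a remainder tending to `∞` into one tending to `-∞`, and a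
nonnegative one into one bounded above. So the remainder of `B_μ B_ν` still tends to `-∞`, because
that of `B_ν` cannot compensate, and a second reciprocal gives the remainder of `ρ`.
For `p = 0` the same identity shows directly that `1 / R_0(s) → 0` for `ρ`.
-/

open Polynomial Topology

/-- The expansion `f(s) = P(s) + (-s)ⁿ r(s)` as `s → 0⁺`, with `s r(s) → 0`. The degree of `P` is
not restricted. The sign in `(-s)ⁿ` makes the remainders of Stieltjes transforms nonnegative. -/
structure HasTaylorExpansion (n : ℕ) (f : ℝ → ℝ) (P : ℝ[X]) (r : ℝ → ℝ) : Prop where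
  eventually_eq : ∀ᶠ s in 𝓝[>] 0, f s = P.eval s + (-s) ^ n * r s
  tendsto_mul_remainder : Tendsto (fun s => s * r s) (𝓝[>] 0) (𝓝 0)

theorem tendsto_id_nhdsGT_zero : Tendsto (fun s : ℝ => s) (𝓝[>] 0) (𝓝 0) :=
  tendsto_nhdsWithin_of_tendsto_nhds tendsto_id

theorem tendsto_eval_nhdsGT_zero (P : ℝ[X]) :
    Tendsto (fun s => P.eval s) (𝓝[>] 0) (𝓝 (P.eval 0)) :=
  tendsto_nhdsWithin_of_tendsto_nhds (P.continuous.tendsto 0)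

namespace HasTaylorExpansion

variable {n : ℕ} {f g : ℝ → ℝ} {P Q : ℝ[X]} {r t : ℝ → ℝ}

theorem congr (h : HasTaylorExpansion n f P r) (hfg : ∀ᶠ s in 𝓝[>] 0, f s = g s) :
    HasTaylorExpansion n g P r where
  eventually_eq := by
    filter_upwards [h.eventually_eq, hfg] with s hf hfg
    rw [← hfg, hf]
  tendsto_mul_remainder := h.tendsto_mul_remainder

theorem sub (hf : HasTaylorExpansion n f P r) (hg : HasTaylorExpansion n g Q t) :
    HasTaylorExpansion n (fun s => f s - g s) (P - Q) (fun s => r s - t s) where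
  eventually_eq := by
    filter_upwards [hf.eventually_eq, hg.eventually_eq] with s hf hg
    rw [hf, hg, eval_sub]
    ring
  tendsto_mul_remainder := by
    simpa only [mul_sub, sub_zero] using hf.tendsto_mul_remainder.sub hg.tendsto_mul_remainder

theorem add_polynomial (h : HasTaylorExpansion n f P r) (D : ℝ[X]) :
    HasTaylorExpansion n (fun s => f s + D.eval s) (P + D) r where
  eventually_eq := by
    filter_upwards [h.eventually_eq] with s hf
    rw [hf, eval_add]
    ring
  tendsto_mul_remainder := h.tendsto_mul_remainder

theorem tendsto_neg_pow_mul_remainder (h : HasTaylorExpansion n f P r) {k : ℕ} (hk : k ≠ 0) :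
    Tendsto (fun s => (-s) ^ k * r s) (𝓝[>] 0) (𝓝 0) := by
  obtain ⟨j, rfl⟩ := Nat.exists_eq_succ_of_ne_zero hk
  have hpow : Tendsto (fun s : ℝ => -(-s) ^ j) (𝓝[>] 0) (𝓝 (-(-0) ^ j)) :=
    (tendsto_id_nhdsGT_zero.neg.pow j).neg
  have hprod := hpow.mul h.tendsto_mul_remainder
  rw [mul_zero] at hprod
  exact hprod.congr fun s => by rw [pow_succ]; ring

theorem tendsto (h : HasTaylorExpansion n f P r) (hn : n ≠ 0) :
    Tendsto f (𝓝[>] 0) (𝓝 (P.eval 0)) := by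
  have hsum := (tendsto_eval_nhdsGT_zero P).add (h.tendsto_neg_pow_mul_remainder hn)
  rw [add_zero] at hsum
  exact hsum.congr' (h.eventually_eq.mono fun _ => Eq.symm)

theorem of_le (h : HasTaylorExpansion n f P r) {k : ℕ} (hk : k ≤ n) :
    HasTaylorExpansion k f P (fun s => (-s) ^ (n - k) * r s) where
  eventually_eq := by
    filter_upwards [h.eventually_eq] with s hf
    rw [hf, ← mul_assoc, ← pow_add, Nat.add_sub_cancel' hk]
  tendsto_mul_remainder := by
    have hlim := (h.tendsto_neg_pow_mul_remainder (n - k).succ_ne_zero).neg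
    rw [neg_zero] at hlim
    exact hlim.congr fun s => by rw [pow_succ]; ring

theorem X_pow_dvd_of_zero (h : HasTaylorExpansion n (fun _ => 0) P r) : X ^ n ∣ P := by
  induction n generalizing r with
  | zero => exact one_dvd P
  | succ n ih =>
    obtain ⟨E, rfl⟩ := ih (h.of_le n.le_succ)
    have hE_eq : ∀ᶠ s in 𝓝[>] 0, (-1) ^ n * (s * r s) = E.eval s := by
      filter_upwards [h.eventually_eq, self_mem_nhdsWithin] with s hs hs_pos
      have hs_ne : s ^ n ≠ 0 := pow_ne_zero n (ne_of_gt hs_pos)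
      apply mul_left_cancel₀ hs_ne
      rw [eval_mul, eval_pow, eval_X, neg_pow, pow_succ (-1 : ℝ)] at hs
      linear_combination hs
    have hE_lim : Tendsto (fun s => (-1) ^ n * (s * r s)) (𝓝[>] 0) (𝓝 0) := by
      simpa only [mul_zero] using h.tendsto_mul_remainder.const_mul ((-1) ^ n)
    have hE_zero : E.eval 0 = 0 :=
      tendsto_nhds_unique (tendsto_eval_nhdsGT_zero E) (hE_lim.congr' hE_eq)
    rw [pow_succ]
    exact mul_dvd_mul_left _ (X_dvd_iff.2 (by rwa [coeff_zero_eq_eval_zero]))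

theorem exists_tendsto_sub_remainder (hr : HasTaylorExpansion n f P r)
    (ht : HasTaylorExpansion n f Q t) :
    ∃ c, Tendsto (fun s => r s - t s) (𝓝[>] 0) (𝓝 c) := by
  have hdiff : HasTaylorExpansion n (fun _ => 0) (P - Q) (fun s => r s - t s) :=
    (hr.sub ht).congr (.of_forall fun s => sub_self (f s))
  obtain ⟨E, hE⟩ := hdiff.X_pow_dvd_of_zero
  refine ⟨-(-1) ^ n * E.eval 0, ((tendsto_eval_nhdsGT_zero E).const_mul _).congr' ?_⟩
  filter_upwards [hdiff.eventually_eq, self_mem_nhdsWithin] with s hs hs_pos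
  have hs_ne : (-s) ^ n ≠ 0 := pow_ne_zero n (neg_ne_zero.2 (ne_of_gt hs_pos))
  apply mul_left_cancel₀ hs_ne
  have hsign : (-s) ^ n * (-1) ^ n = s ^ n := by rw [← mul_pow]; simp
  rw [hE, eval_mul, eval_pow, eval_X] at hs
  linear_combination hs - E.eval s * hsign

theorem mul (hf : HasTaylorExpansion n f P r) (hg : HasTaylorExpansion n g Q t) (hn : n ≠ 0) :
    HasTaylorExpansion n (fun s => f s * g s) (P * Q) (fun s => r s * Q.eval s + f s * t s) where
  eventually_eq := by
    filter_upwards [hf.eventually_eq, hg.eventually_eq] with s hf hg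
    rw [hg, eval_mul]
    linear_combination Q.eval s * hf
  tendsto_mul_remainder := by
    have hsum := (hf.tendsto_mul_remainder.mul (tendsto_eval_nhdsGT_zero Q)).add
      ((hf.tendsto hn).mul hg.tendsto_mul_remainder)
    rw [zero_mul, mul_zero, add_zero] at hsum
    exact hsum.congr fun s => by ring

-- A Bézout relation `Q P + b Xⁿ = 1` provides the Taylor polynomial `Q` of `1 / P`.
theorem exists_inv (h : HasTaylorExpansion n f P r) (hn : n ≠ 0) (hP : P.eval 0 ≠ 0) :
    ∃ (Q : ℝ[X]) (v w : ℝ → ℝ) (c : ℝ), Q.eval 0 = (P.eval 0)⁻¹ ∧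
      Tendsto v (𝓝[>] 0) (𝓝 c) ∧ Tendsto w (𝓝[>] 0) (𝓝 ((P.eval 0)⁻¹ ^ 2)) ∧
      HasTaylorExpansion n (fun s => (f s)⁻¹) Q (fun s => v s - w s * r s) := by
  have hcop : IsCoprime P (X ^ n) := by
    refine (IsCoprime.pow_left (irreducible_X.coprime_iff_not_dvd.2 ?_)).symm
    rwa [X_dvd_iff, coeff_zero_eq_eval_zero]
  obtain ⟨Q, b, hQb⟩ := hcop
  have hQb_eval (s : ℝ) : Q.eval s * P.eval s + b.eval s * s ^ n = 1 := by
    simpa only [eval_add, eval_mul, eval_pow, eval_X, eval_one] using congrArg (eval s) hQb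
  have hQ : Q.eval 0 = (P.eval 0)⁻¹ :=
    eq_inv_of_mul_eq_one_left (by simpa [hn] using hQb_eval 0)
  have hf := h.tendsto hn
  have hv : Tendsto (fun s => (-1) ^ n * b.eval s / f s) (𝓝[>] 0)
      (𝓝 ((-1) ^ n * b.eval 0 / P.eval 0)) :=
    ((tendsto_eval_nhdsGT_zero b).const_mul ((-1) ^ n)).div hf hP
  have hw : Tendsto (fun s => Q.eval s / f s) (𝓝[>] 0) (𝓝 ((P.eval 0)⁻¹ ^ 2)) := by
    rw [sq, ← div_eq_mul_inv, ← hQ]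
    exact (tendsto_eval_nhdsGT_zero Q).div hf hP
  refine ⟨Q, _, _, _, hQ, hv, hw, ?_, ?_⟩
  · filter_upwards [h.eventually_eq, hf.eventually_ne hP] with s hs hs_ne
    have hsign : (-s) ^ n * (-1) ^ n = s ^ n := by rw [← mul_pow]; simp
    field_simp
    linear_combination -hQb_eval s - b.eval s * hsign - Q.eval s * hs
  · have hlim := (tendsto_id_nhdsGT_zero.mul hv).sub (hw.mul h.tendsto_mul_remainder)
    rw [zero_mul, mul_zero, sub_zero] at hlim
    exact hlim.congr fun s => by ring

theorem exists_inv_tendsto_atBot (h : HasTaylorExpansion n f P r) (hn : n ≠ 0)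
    (hP : 0 < P.eval 0) (hr : Tendsto r (𝓝[>] 0) atTop) :
    ∃ Q t, 0 < Q.eval 0 ∧ HasTaylorExpansion n (fun s => (f s)⁻¹) Q t ∧
      Tendsto t (𝓝[>] 0) atBot := by
  obtain ⟨Q, v, w, c, hQ, hv, hw, hexp⟩ := h.exists_inv hn hP.ne'
  have hwr := hw.pos_mul_atTop (by positivity) hr
  refine ⟨Q, _, by rw [hQ]; positivity, hexp, ?_⟩
  have hsum := hv.add_atBot (tendsto_neg_atTop_atBot.comp hwr)
  simpa only [sub_eq_add_neg, Function.comp_def] using hsum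

theorem exists_inv_tendsto_atTop (h : HasTaylorExpansion n f P r) (hn : n ≠ 0)
    (hP : 0 < P.eval 0) (hr : Tendsto r (𝓝[>] 0) atBot) :
    ∃ Q t, HasTaylorExpansion n (fun s => (f s)⁻¹) Q t ∧ Tendsto t (𝓝[>] 0) atTop := by
  obtain ⟨Q, v, w, c, -, hv, hw, hexp⟩ := h.exists_inv hn hP.ne'
  have hwr := hw.pos_mul_atBot (by positivity) hr
  refine ⟨Q, _, hexp, ?_⟩
  have hsum := hv.add_atTop (tendsto_neg_atBot_atTop.comp hwr)
  simpa only [sub_eq_add_neg, Function.comp_def] using hsum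

theorem exists_inv_remainder_le (h : HasTaylorExpansion n f P r) (hn : n ≠ 0)
    (hP : 0 < P.eval 0) (hr : ∀ᶠ s in 𝓝[>] 0, 0 ≤ r s) :
    ∃ Q t C, 0 < Q.eval 0 ∧ HasTaylorExpansion n (fun s => (f s)⁻¹) Q t ∧
      ∀ᶠ s in 𝓝[>] 0, t s ≤ C := by
  obtain ⟨Q, v, w, c, hQ, hv, hw, hexp⟩ := h.exists_inv hn hP.ne'
  refine ⟨Q, _, c + 1, by rw [hQ]; positivity, hexp, ?_⟩
  filter_upwards [hr, hv.eventually_le_const (lt_add_one c),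
    hw.eventually_const_lt (by positivity : 0 < (P.eval 0)⁻¹ ^ 2)] with s hr hv hw
  linarith [mul_nonneg hw.le hr]

theorem exists_boolean_mul (hf : HasTaylorExpansion n f P r) (hg : HasTaylorExpansion n g Q t)
    (hn : n ≠ 0) (hP : 0 < P.eval 0) (hQ : 0 < Q.eval 0) (hr : Tendsto r (𝓝[>] 0) atTop)
    (ht : ∀ᶠ s in 𝓝[>] 0, 0 ≤ t s) :
    ∃ S u, HasTaylorExpansion n (fun s => (((f s)⁻¹ - s) * ((g s)⁻¹ - s) + s)⁻¹) S u ∧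
      Tendsto u (𝓝[>] 0) atTop := by
  obtain ⟨P', r', hP', hf_inv, hr'⟩ := hf.exists_inv_tendsto_atBot hn hP hr
  obtain ⟨Q', t', C, hQ', hg_inv, ht'⟩ := hg.exists_inv_remainder_le hn hQ ht
  have hBf := hf_inv.add_polynomial (-X)
  have hBg := hg_inv.add_polynomial (-X)
  have hBf_zero : 0 < (P' + -X).eval 0 := by simpa using hP'
  have hBg_zero : 0 < (Q' + -X).eval 0 := by simpa using hQ'
  have hprod := (hBf.mul hBg hn).add_polynomial X
  have hprod_zero : 0 < ((P' + -X) * (Q' + -X) + X).eval 0 := by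
    simpa using mul_pos hP' hQ'
  have hBf_lim := hBf.tendsto hn
  have hrem : Tendsto (fun s => r' s * (Q' + -X).eval s + ((f s)⁻¹ + (-X : ℝ[X]).eval s) * t' s)
      (𝓝[>] 0) atBot := by
    have hmain := hr'.atBot_mul_pos hBg_zero (tendsto_eval_nhdsGT_zero (Q' + -X))
    refine tendsto_atBot_mono' _ ?_ (hmain.atBot_add (hBf_lim.mul_const C))
    filter_upwards [ht', hBf_lim.eventually_const_lt hBf_zero] with s ht' hpos
    gcongr
  obtain ⟨S, u, hexp, hu⟩ := hprod.exists_inv_tendsto_atTop hn hprod_zero hrem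
  refine ⟨S, u, hexp.congr (.of_forall fun s => ?_), hu⟩
  simp only [eval_neg, eval_X, sub_eq_add_neg]

end HasTaylorExpansion

/-- The remainder `R_n(s) = ∫ tⁿ⁺¹ / (1 + s t) dτ(t)` of the expansion at `0⁺` of the Stieltjes
transform `R_0(s) = ∫ t / (1 + s t) dτ(t) = -Ψ_τ(-s) / s`. -/
def momentRemainder (τ : Measure ℝ) (n : ℕ) (s : ℝ) : ℝ := ∫ t, t ^ (n + 1) / (1 + s * t) ∂τ

/-- The polynomial `∑_{k < n} (-s)ᵏ m_{k+1}`, where `m_j` is the `j`-th moment of `τ`. -/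
def momentPolynomial (τ : Measure ℝ) (n : ℕ) : ℝ[X] :=
  ∑ k ∈ Finset.range n, monomial k ((-1) ^ k * ∫ t, t ^ (k + 1) ∂τ)

section NonnegativeSupport

variable {τ : Measure ℝ} {n : ℕ} {s : ℝ} (h0 : ∀ᵐ t ∂τ, 0 ≤ t)
include h0

theorem ae_nonneg_momentRemainder_integrand (n : ℕ) (hs : 0 ≤ s) :
    0 ≤ᵐ[τ] fun t => t ^ (n + 1) / (1 + s * t) := by
  filter_upwards [h0] with t ht
  simp only [Pi.zero_apply]
  positivity

theorem momentRemainder_nonneg (n : ℕ) (hs : 0 ≤ s) : 0 ≤ momentRemainder τ n s :=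
  integral_nonneg_of_ae (ae_nonneg_momentRemainder_integrand h0 n hs)

theorem integrable_momentRemainder_integrand (hn : Integrable (fun t => t ^ n) τ) (hs : 0 < s) :
    Integrable (fun t => t ^ (n + 1) / (1 + s * t)) τ := by
  refine (hn.const_mul s⁻¹).mono' (Measurable.aestronglyMeasurable (by fun_prop)) ?_
  filter_upwards [h0] with t ht
  rw [Real.norm_of_nonneg (by positivity)]
  calc t ^ (n + 1) / (1 + s * t) = s⁻¹ * t ^ n * (s * t / (1 + s * t)) := by
        rw [pow_succ]
        field_simp
    _ ≤ s⁻¹ * t ^ n :=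
      mul_le_of_le_one_right (by positivity) (div_le_one_of_le₀ (by linarith) (by positivity))

theorem momentRemainder_antitoneOn (hn : Integrable (fun t => t ^ n) τ) :
    AntitoneOn (momentRemainder τ n) (Ioi 0) := by
  intro s (hs : 0 < s) s' (hs' : 0 < s') hss'
  apply integral_mono_ae (integrable_momentRemainder_integrand h0 hn hs')
    (integrable_momentRemainder_integrand h0 hn hs)
  filter_upwards [h0] with t ht
  gcongr

theorem momentRemainder_pos (hn : Integrable (fun t => t ^ n) τ) (hτ : τ (Ioi 0) ≠ 0)
    (hs : 0 < s) : 0 < momentRemainder τ n s := by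
  refine (integral_pos_iff_support_of_nonneg_ae (ae_nonneg_momentRemainder_integrand h0 n hs.le)
    (integrable_momentRemainder_integrand h0 hn hs)).2 ?_
  refine (pos_iff_ne_zero.2 hτ).trans_le (measure_mono fun t (ht : 0 < t) => ?_)
  exact (by positivity : t ^ (n + 1) / (1 + s * t) ≠ 0)

theorem tendsto_mul_momentRemainder (hn : Integrable (fun t => t ^ n) τ) :
    Tendsto (fun s => s * momentRemainder τ n s) (𝓝[>] 0) (𝓝 0) := by
  suffices hlim : Tendsto (fun s => ∫ t, s * (t ^ (n + 1) / (1 + s * t)) ∂τ) (𝓝[>] 0)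
      (𝓝 (∫ _, (0 : ℝ) ∂τ)) by
    simpa only [momentRemainder, integral_const_mul, integral_zero] using hlim
  apply tendsto_integral_filter_of_dominated_convergence (fun t => t ^ n) _ _ hn
  · refine .of_forall fun t => tendsto_nhdsWithin_of_tendsto_nhds ?_
    have hcont : ContinuousAt (fun s : ℝ => s * (t ^ (n + 1) / (1 + s * t))) 0 :=
      continuousAt_id.mul (continuousAt_const.div (by fun_prop) (by simp))
    simpa only [zero_mul] using hcont.tendsto
  · exact .of_forall fun s => Measurable.aestronglyMeasurable (by fun_prop)
  · filter_upwards [self_mem_nhdsWithin] with s (hs : 0 < s)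
    filter_upwards [h0] with t ht
    rw [Real.norm_of_nonneg (by positivity)]
    calc s * (t ^ (n + 1) / (1 + s * t)) = t ^ n * (s * t / (1 + s * t)) := by ring
      _ ≤ t ^ n :=
        mul_le_of_le_one_right (by positivity) (div_le_one_of_le₀ (by linarith) (by positivity))

theorem momentRemainder_eq_sub (hn : Integrable (fun t => t ^ (n + 1)) τ) (hs : 0 < s) :
    momentRemainder τ n s = ∫ t, t ^ (n + 1) ∂τ - s * momentRemainder τ (n + 1) s := by
  have hint := (integrable_momentRemainder_integrand h0 hn hs).const_mul s
  unfold momentRemainder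
  rw [← integral_const_mul, ← integral_sub hn hint]
  apply integral_congr_ae
  filter_upwards [h0] with t ht
  have hden : 1 + s * t ≠ 0 := by positivity
  field_simp
  ring

theorem integrable_pow_of_le [IsFiniteMeasure τ] {k : ℕ} (hn : Integrable (fun t => t ^ n) τ)
    (hk : k ≤ n) : Integrable (fun t => t ^ k) τ := by
  have hnorm (j : ℕ) : (fun t : ℝ => ‖t‖ ^ j) =ᵐ[τ] fun t => t ^ j := by
    filter_upwards [h0] with t ht
    rw [Real.norm_of_nonneg ht]
  exact (integrable_norm_pow_of_le aestronglyMeasurable_id hk (hn.congr (hnorm n).symm)).congr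
    (hnorm k)

theorem hasTaylorExpansion_momentRemainder_zero [IsFiniteMeasure τ]
    (hn : Integrable (fun t => t ^ n) τ) :
    HasTaylorExpansion n (momentRemainder τ 0) (momentPolynomial τ n) (momentRemainder τ n) where
  eventually_eq := by
    filter_upwards [self_mem_nhdsWithin] with s hs
    induction n with
    | zero => simp [momentPolynomial]
    | succ n ih =>
      rw [ih (integrable_pow_of_le h0 hn n.le_succ), momentRemainder_eq_sub h0 hn hs]
      simp only [momentPolynomial, Finset.sum_range_succ, eval_add, eval_monomial, neg_pow s]
      ring
  tendsto_mul_remainder := tendsto_mul_momentRemainder h0 hn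

theorem integrable_pow_succ_of_momentRemainder_le (hn : Integrable (fun t => t ^ n) τ) {C : ℝ}
    (hC : ∀ s, 0 < s → momentRemainder τ n s ≤ C) : Integrable (fun t => t ^ (n + 1)) τ := by
  let a : ℕ → ℝ := fun k => 1 / ((k : ℝ) + 1)
  have ha (k : ℕ) : 0 < a k := by positivity
  have ha_lim : Tendsto a atTop (𝓝 0) := tendsto_one_div_add_atTop_nhds_zero_nat
  apply integrable_of_tendsto (G := fun k t => t ^ (n + 1) / (1 + a k * t))
  · refine .of_forall fun t => ?_
    have hlim : Tendsto (fun k => t ^ (n + 1) / (1 + a k * t)) atTop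
        (𝓝 (t ^ (n + 1) / (1 + 0 * t))) :=
      tendsto_const_nhds.div ((ha_lim.mul_const t).const_add 1) (by simp)
    simpa only [zero_mul, add_zero, div_one] using hlim
  · exact fun k => Measurable.aestronglyMeasurable (by fun_prop)
  · have hbound (k : ℕ) : ∫⁻ t, ‖t ^ (n + 1) / (1 + a k * t)‖ₑ ∂τ ≤ ENNReal.ofReal C := by
      rw [← ofReal_integral_norm_eq_lintegral_enorm
        (integrable_momentRemainder_integrand h0 hn (ha k))]
      refine ENNReal.ofReal_le_ofReal ((integral_congr_ae ?_).trans_le (hC (a k) (ha k)))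
      filter_upwards [ae_nonneg_momentRemainder_integrand h0 n (ha k).le] with t ht
      exact Real.norm_of_nonneg ht
    have hliminf := liminf_le_of_frequently_le' (.of_forall hbound) (f := atTop)
    exact (hliminf.trans_lt ENNReal.ofReal_lt_top).ne

theorem tendsto_momentRemainder_atTop_iff (hn : Integrable (fun t => t ^ n) τ) :
    Tendsto (momentRemainder τ n) (𝓝[>] 0) atTop ↔ ¬ Integrable (fun t => t ^ (n + 1)) τ := by
  constructor
  · intro htop hint
    have hlim : Tendsto (momentRemainder τ n) (𝓝[>] 0) (𝓝 (∫ t, t ^ (n + 1) ∂τ - 0)) := by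
      refine ((tendsto_mul_momentRemainder h0 hint).const_sub _).congr' ?_
      filter_upwards [self_mem_nhdsWithin] with s hs
      exact (momentRemainder_eq_sub h0 hint hs).symm
    exact not_tendsto_nhds_of_tendsto_atTop htop _ hlim
  · intro hint
    refine tendsto_atTop.2 fun C => ?_
    obtain ⟨s₀, hs₀, hC⟩ : ∃ s, 0 < s ∧ C < momentRemainder τ n s := by
      by_contra! hC
      exact hint (integrable_pow_succ_of_momentRemainder_le h0 hn hC)
    filter_upwards [Ioo_mem_nhdsGT hs₀] with s hs
    exact hC.le.trans (momentRemainder_antitoneOn h0 hn hs.1 hs₀ hs.2.le)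

theorem eval_zero_momentPolynomial_pos [IsFiniteMeasure τ] (hn : Integrable (fun t => t ^ n) τ)
    (hn0 : n ≠ 0) (hτ : τ (Ioi 0) ≠ 0) : 0 < (momentPolynomial τ n).eval 0 := by
  have h1 : Integrable (fun t => t ^ 0) τ := integrable_pow_of_le h0 hn n.zero_le
  refine (momentRemainder_pos h0 h1 hτ one_pos).trans_le ?_
  refine ge_of_tendsto ((hasTaylorExpansion_momentRemainder_zero h0 hn).tendsto hn0) ?_
  filter_upwards [Ioo_mem_nhdsGT one_pos] with s hs
  exact momentRemainder_antitoneOn h0 h1 hs.1 (mem_Ioi.2 one_pos) hs.2.le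

theorem measure_Ioi_zero_ne_zero_of_not_integrable
    (hn : ¬ Integrable (fun t => t ^ (n + 1)) τ) : τ (Ioi 0) ≠ 0 := by
  intro hτ
  have hτ_le : ∀ᵐ t ∂τ, t ≤ 0 := by
    rw [ae_iff]
    simpa only [not_le] using! hτ
  refine hn ((integrable_zero ℝ ℝ τ).congr ?_)
  filter_upwards [h0, hτ_le] with t ht ht'
  simp [le_antisymm ht' ht]

theorem memMp_iff_integrable (n : ℕ) :
    MemMp τ n ↔ Integrable (fun t => t ^ n) τ ∧ ¬ Integrable (fun t => t ^ (n + 1)) τ := by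
  have hiff (k : ℕ) : ∫⁻ t, ENNReal.ofReal (t ^ k) ∂τ ≠ ⊤ ↔ Integrable (fun t => t ^ k) τ :=
    lintegral_ofReal_ne_top_iff_integrable (by fun_prop) (h0.mono fun t ht => pow_nonneg ht k)
  rw [MemMp, hiff, ← hiff (n + 1), not_not]

theorem HasTaylorExpansion.integrable_pow [IsFiniteMeasure τ] {P : ℝ[X]} {r : ℝ → ℝ}
    (h : HasTaylorExpansion n (momentRemainder τ 0) P r) {k : ℕ} (hk : k ≤ n) :
    Integrable (fun t => t ^ k) τ := by
  induction k with
  | zero => simp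
  | succ k ih =>
    have hint := ih (Nat.le_of_succ_le hk)
    by_contra hnot
    obtain ⟨c, hc⟩ := (hasTaylorExpansion_momentRemainder_zero h0 hint).exists_tendsto_sub_remainder
      (h.of_le (Nat.le_of_succ_le hk))
    have hlim := hc.add (h.tendsto_neg_pow_mul_remainder (Nat.sub_ne_zero_of_lt hk))
    simp only [sub_add_cancel] at hlim
    exact not_tendsto_nhds_of_tendsto_atTop
      ((tendsto_momentRemainder_atTop_iff h0 hint).2 hnot) _ hlim

theorem HasTaylorExpansion.not_integrable_pow_succ [IsFiniteMeasure τ] {P : ℝ[X]} {r : ℝ → ℝ}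
    (h : HasTaylorExpansion n (momentRemainder τ 0) P r) (hr : Tendsto r (𝓝[>] 0) atTop) :
    ¬ Integrable (fun t => t ^ (n + 1)) τ := by
  have hint := h.integrable_pow h0 le_rfl
  obtain ⟨c, hc⟩ := (hasTaylorExpansion_momentRemainder_zero h0 hint).exists_tendsto_sub_remainder h
  rw [← tendsto_momentRemainder_atTop_iff h0 hint]
  simpa only [sub_add_cancel] using hc.add_atTop hr

theorem eventually_inv_momentRemainder_sub_pos [IsFiniteMeasure τ] (hτ : τ (Ioi 0) ≠ 0) :
    ∀ᶠ s in 𝓝[>] 0, 0 < (momentRemainder τ 0 s)⁻¹ - s := by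
  have h1 : Integrable (fun t => t ^ 0) τ := by simp
  filter_upwards [self_mem_nhdsWithin,
    (tendsto_mul_momentRemainder h0 h1).eventually_lt_const one_pos] with s hs hlt
  rwa [sub_pos, lt_inv_comm₀ hs (momentRemainder_pos h0 h1 hτ hs), ← one_div, lt_div_iff₀' hs]

end NonnegativeSupport

theorem PsiTrans_neg (τ : Measure ℝ) (s : ℝ) :
    PsiTrans τ (-s : ℝ) = (-(s * momentRemainder τ 0 s) : ℝ) := by
  unfold PsiTrans momentRemainder
  rw [← integral_const_mul, ← integral_neg, ← integral_complex_ofReal]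
  congr 1 with t
  push_cast
  ring

theorem Btrans_neg (τ : Measure ℝ) {s : ℝ} (hs : s ≠ 0) :
    Btrans τ (-s : ℝ) = ((1 - s * momentRemainder τ 0 s) / momentRemainder τ 0 s : ℝ) := by
  rw [Btrans, etaTrans, PsiTrans_neg]
  norm_cast
  rw [div_div_eq_mul_div, ← sub_eq_add_neg, neg_mul, neg_div_neg_eq, mul_div_mul_left _ _ hs]

section BooleanConvolution

variable {μ ν ρ : Measure ℝ} [IsFiniteMeasure μ] [IsFiniteMeasure ν]
  (hμ0 : ∀ᵐ t ∂μ, 0 ≤ t) (hν0 : ∀ᵐ t ∂ν, 0 ≤ t)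
include hμ0 hν0

theorem eventually_momentRemainder_eq_of_Btrans_eq_mul (hμ : μ (Ioi 0) ≠ 0) (hν : ν (Ioi 0) ≠ 0)
    (hB : ∀ᶠ s : ℝ in 𝓝[>] 0, Btrans ρ (-s : ℝ) = Btrans μ (-s : ℝ) * Btrans ν (-s : ℝ)) :
    ∀ᶠ s in 𝓝[>] 0, momentRemainder ρ 0 s =
      (((momentRemainder μ 0 s)⁻¹ - s) * ((momentRemainder ν 0 s)⁻¹ - s) + s)⁻¹ := by
  filter_upwards [hB, self_mem_nhdsWithin, eventually_inv_momentRemainder_sub_pos hμ0 hμ,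
    eventually_inv_momentRemainder_sub_pos hν0 hν] with s hB (hs : 0 < s) hμs hνs
  have hμ_ne := (momentRemainder_pos hμ0 (n := 0) (by simp) hμ hs).ne'
  have hν_ne := (momentRemainder_pos hν0 (n := 0) (by simp) hν hs).ne'
  have sub_div_self {x : ℝ} (hx : x ≠ 0) : (1 - s * x) / x = x⁻¹ - s := by field_simp
  rw [Btrans_neg ρ hs.ne', Btrans_neg μ hs.ne', Btrans_neg ν hs.ne', sub_div_self hμ_ne,
    sub_div_self hν_ne] at hB
  replace hB : (1 - s * momentRemainder ρ 0 s) / momentRemainder ρ 0 s = _ := mod_cast hB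
  have hρ_ne : momentRemainder ρ 0 s ≠ 0 := by
    intro hzero
    rw [hzero, div_zero] at hB
    exact (mul_pos hμs hνs).ne hB
  rw [← hB, sub_div_self hρ_ne, sub_add_cancel, inv_inv]

theorem tendsto_boolean_mul_momentRemainder_zero (hμ : ¬ Integrable (fun t => t) μ)
    (hν : ν (Ioi 0) ≠ 0) :
    Tendsto (fun s => (((momentRemainder μ 0 s)⁻¹ - s) * ((momentRemainder ν 0 s)⁻¹ - s) + s)⁻¹)
      (𝓝[>] 0) atTop := by
  have hμ_top : Tendsto (momentRemainder μ 0) (𝓝[>] 0) atTop :=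
    (tendsto_momentRemainder_atTop_iff hμ0 (by simp)).2 (by simpa using hμ)
  have hμ_pos := measure_Ioi_zero_ne_zero_of_not_integrable hμ0 (n := 0) (by simpa using hμ)
  have hBμ : Tendsto (fun s => (momentRemainder μ 0 s)⁻¹ - s) (𝓝[>] 0) (𝓝 0) := by
    simpa using hμ_top.inv_tendsto_atTop.sub tendsto_id_nhdsGT_zero
  have hBν : ∀ᶠ s in 𝓝[>] 0, (momentRemainder ν 0 s)⁻¹ - s ≤ (momentRemainder ν 0 1)⁻¹ := by
    filter_upwards [Ioo_mem_nhdsGT one_pos] with s hs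
    have hanti := momentRemainder_antitoneOn hν0 (n := 0) (by simp) hs.1 (mem_Ioi.2 one_pos) hs.2.le
    have hinv := inv_anti₀ (momentRemainder_pos hν0 (by simp) hν one_pos) hanti
    linarith [hs.1]
  have hBμ_pos := eventually_inv_momentRemainder_sub_pos hμ0 hμ_pos
  have hBν_pos := eventually_inv_momentRemainder_sub_pos hν0 hν
  have hlim := (bdd_le_mul_tendsto_zero (hBν_pos.mono fun _ => le_of_lt) hBν hBμ).add
    tendsto_id_nhdsGT_zero
  rw [add_zero] at hlim
  refine Tendsto.inv_tendsto_nhdsGT_zero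
    (tendsto_nhdsWithin_iff.2 ⟨by simpa only [mul_comm] using hlim, ?_⟩)
  filter_upwards [hBμ_pos, hBν_pos, self_mem_nhdsWithin] with s hBμ hBν (hs : 0 < s)
  exact add_pos (mul_pos hBμ hBν) hs

end BooleanConvolution

theorem ae_nonneg_of_measure_Iio_eq_zero {τ : Measure ℝ} (hτ : τ (Iio 0) = 0) :
    ∀ᵐ t ∂τ, 0 ≤ t := by
  rw [ae_iff]
  simpa only [not_le] using! hτ

theorem mult_boolean_moments_general (p : ℕ) (μ ν ρ : Measure ℝ)
    [IsFiniteMeasure μ] [IsFiniteMeasure ν] [IsFiniteMeasure ρ]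
    (hμ0 : ∀ᵐ t ∂μ, 0 ≤ t) (hν0 : ∀ᵐ t ∂ν, 0 ≤ t) (hρ0 : ∀ᵐ t ∂ρ, 0 ≤ t)
    (hμ : MemMp μ p) (hν : Integrable (fun t => t ^ p) ν) (hν_pos : ν (Ioi 0) ≠ 0)
    (hB : ∀ᶠ s : ℝ in 𝓝[>] 0, Btrans ρ (-s : ℝ) = Btrans μ (-s : ℝ) * Btrans ν (-s : ℝ)) :
    MemMp ρ p := by
  rw [memMp_iff_integrable hμ0] at hμ
  rw [memMp_iff_integrable hρ0]
  have hμ_pos := measure_Ioi_zero_ne_zero_of_not_integrable hμ0 hμ.2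
  have hρ := eventually_momentRemainder_eq_of_Btrans_eq_mul hμ0 hν0 hμ_pos hν_pos hB
  rcases eq_or_ne p 0 with rfl | hp
  · have htop := (tendsto_boolean_mul_momentRemainder_zero hμ0 hν0 (by simpa using hμ.2)
      hν_pos).congr' (hρ.mono fun _ => Eq.symm)
    have hint : Integrable (fun t => t ^ 0) ρ := by simp
    exact ⟨hint, (tendsto_momentRemainder_atTop_iff hρ0 hint).1 htop⟩
  · obtain ⟨S, u, hexp, hu⟩ :=
      (hasTaylorExpansion_momentRemainder_zero hμ0 hμ.1).exists_boolean_mul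
        (hasTaylorExpansion_momentRemainder_zero hν0 hν) hp
        (eval_zero_momentPolynomial_pos hμ0 hμ.1 hp hμ_pos)
        (eval_zero_momentPolynomial_pos hν0 hν hp hν_pos)
        ((tendsto_momentRemainder_atTop_iff hμ0 hμ.1).2 hμ.2)
        (eventually_mem_nhdsWithin.mono fun s hs => momentRemainder_nonneg hν0 p (le_of_lt hs))
    have hexp_ρ := hexp.congr (hρ.mono fun _ => Eq.symm)
    exact ⟨hexp_ρ.integrable_pow hρ0 le_rfl, hexp_ρ.not_integrable_pow_succ hρ0 hu⟩

/-- moments of the multiplicative Boolean convolution. -/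
theorem mult_boolean_moments
    (p q : ℕ) (hpq : p ≤ q) (hq : 1 ≤ q)
    (μ ν ρ : Measure ℝ)
    [IsProbabilityMeasure μ] [IsProbabilityMeasure ν] [IsProbabilityMeasure ρ]
    (hsuppμ : μ (Set.Iio (0 : ℝ)) = 0) (hsuppν : ν (Set.Iio (0 : ℝ)) = 0)
    (hsuppρ : ρ (Set.Iio (0 : ℝ)) = 0)
    (hμ : MemMp μ p) (hν : MemMp ν q)
    (hB : ∀ z : ℂ, offHalfLine z → Btrans ρ z = Btrans μ z * Btrans ν z) :
    MemMp ρ p := by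
  have hν0 := ae_nonneg_of_measure_Iio_eq_zero hsuppν
  obtain ⟨hν_int, hν_not⟩ := (memMp_iff_integrable hν0 q).1 hν
  exact mult_boolean_moments_general p μ ν ρ (ae_nonneg_of_measure_Iio_eq_zero hsuppμ) hν0
    (ae_nonneg_of_measure_Iio_eq_zero hsuppρ) hμ (integrable_pow_of_le hν0 hν_int hpq)
    (measure_Ioi_zero_ne_zero_of_not_integrable hν0 hν_not)
    (eventually_mem_nhdsWithin.mono fun s hs => hB _ (Or.inr (by simpa using hs)))
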